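/- arXiv:2310.15462 — 5 statements merged into one kernel-verified Lean document; each statement's English description precedes it below -/
import Mathlib

section
/- Let m and (m_n)_{n≥1} be measures on a measurable space (U, 𝓖) with m σ-finite, such that m_n(A) ≤ m_{n+1}(A) for every A ∈ 𝓖 and every n, and lim_{n→∞} m_n(A) = m(A) for every A ∈ 𝓖. Then for every k ≥ 1 the k-fold product measures satisfy m_n^k(A) ≤ m_{n+1}^k(A) for every A in the product σ-algebra 𝓖^{⊗k} and every n, and lim_{n→∞} m_n^k(A) = m^k(A) for every A ∈ 𝓖^{⊗k}. -/
open MeasureTheory Filter Topology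
open scoped ENNReal NNReal

/-!
The pointwise supremum of an increasing family of measures is again a measure, so it is the
supremum in the lattice of measures. The supremum of the product measures therefore has on a
box `∏ i, s i` the value `⨆ n, ∏ i, μ n i (s i) = ∏ i, ⨆ n, μ n i (s i)`, and a product of σ-finite
measures is determined by its values on boxes.
-/

section ExtendedNonnegReal

variable {κ : Type*} [Preorder κ] [IsDirectedOrder κ]

theorem ennreal_iSup_mul_iSup_of_monotone {f g : κ → ℝ≥0∞} (hf : Monotone f) (hg : Monotone g) :
    (⨆ n, f n) * ⨆ n, g n = ⨆ n, f n * g n := by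
  simp only [ENNReal.iSup_mul, ENNReal.mul_iSup]
  refine le_antisymm (iSup₂_le fun q p => ?_) (iSup_le fun n => le_iSup₂_of_le n n le_rfl)
  obtain ⟨r, hpr, hqr⟩ := exists_ge_ge p q
  exact le_iSup_of_le r (mul_le_mul' (hf hpr) (hg hqr))

theorem ennreal_finsetProd_iSup_of_monotone [Nonempty κ] {ι : Type*} (s : Finset ι)
    {f : ι → κ → ℝ≥0∞} (hf : ∀ i, Monotone (f i)) :
    ∏ i ∈ s, ⨆ n, f i n = ⨆ n, ∏ i ∈ s, f i n := by
  induction s using Finset.cons_induction with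
  | empty => simp
  | cons a s ha ih =>
    simp only [Finset.prod_cons, ih]
    exact ennreal_iSup_mul_iSup_of_monotone (hf a)
      fun _ _ hpq => Finset.prod_le_prod' fun i _ => hf i hpq

theorem ennreal_tsum_iSup_of_monotone {ι : Type*} {f : ι → κ → ℝ≥0∞} (hf : ∀ i, Monotone (f i)) :
    ∑' i, ⨆ n, f i n = ⨆ n, ∑' i, f i n := by
  simp only [ENNReal.tsum_eq_iSup_sum]
  rw [iSup_comm]
  exact iSup_congr fun s => ENNReal.finsetSum_iSup_of_monotone hf

end ExtendedNonnegReal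

section IncreasingMeasures

variable {κ X : Type*} [Preorder κ] [IsDirectedOrder κ] [MeasurableSpace X] {μ : κ → Measure X}

theorem iSup_measure_apply_of_monotone (hμ : Monotone μ) {A : Set X} (hA : MeasurableSet A) :
    (⨆ n, μ n) A = ⨆ n, μ n A := by
  let ν : Measure X := Measure.ofMeasurable (fun B _ => ⨆ n, μ n B) (by simp) fun B hB hdisj => by
    rw [ennreal_tsum_iSup_of_monotone fun i _ _ hpq => hμ hpq (B i)]
    exact iSup_congr fun n => measure_iUnion hdisj hB
  have hν {B : Set X} (hB : MeasurableSet B) : ν B = ⨆ n, μ n B := Measure.ofMeasurable_apply B hB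
  have iSup_le_ν : ⨆ n, μ n ≤ ν := iSup_le fun n => Measure.le_iff.2 fun B hB =>
    (le_iSup (fun n => μ n B) n).trans_eq (hν hB).symm
  exact le_antisymm ((iSup_le_ν A).trans_eq (hν hA)) (iSup_le fun n => le_iSup μ n A)

theorem tendsto_iSup_measure_apply (hμ : Monotone μ) {A : Set X} (hA : MeasurableSet A) :
    Tendsto (fun n => μ n A) atTop (𝓝 ((⨆ n, μ n) A)) := by
  rw [iSup_measure_apply_of_monotone hμ hA]
  exact tendsto_atTop_iSup fun _ _ hpq => hμ hpq A

theorem iSup_measure_eq_of_tendsto [Nonempty κ] {m : Measure X} (hμ : Monotone μ)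
    (hlim : ∀ A, MeasurableSet A → Tendsto (fun n => μ n A) atTop (𝓝 (m A))) :
    ⨆ n, μ n = m :=
  Measure.ext fun A hA =>
    tendsto_nhds_unique (tendsto_iSup_measure_apply hμ hA) (hlim A hA)

end IncreasingMeasures

section ProductMeasures

variable {ι : Type*} [Fintype ι] {X : ι → Type*} [∀ i, MeasurableSpace (X i)]

theorem measurePi_mono {μ ν : ∀ i, Measure (X i)} (h : μ ≤ ν) : Measure.pi μ ≤ Measure.pi ν := by
  have outer_le : OuterMeasure.pi (fun i => (μ i).toOuterMeasure) ≤
      OuterMeasure.pi fun i => (ν i).toOuterMeasure :=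
    OuterMeasure.le_pi.2 fun s _ =>
      (OuterMeasure.pi_pi_le _ s).trans (Finset.prod_le_prod' fun i _ => h i (s i))
  refine Measure.le_iff.2 fun A hA => ?_
  rw [Measure.pi, Measure.pi, toMeasure_apply _ _ hA, toMeasure_apply _ _ hA]
  exact outer_le A

variable {κ : Type*} [Preorder κ] [IsDirectedOrder κ] [Nonempty κ] {μ : κ → ∀ i, Measure (X i)}

theorem measurePi_iSup_of_monotone (hμ : Monotone μ) [∀ i, SigmaFinite (⨆ n, μ n i)] :
    Measure.pi (fun i => ⨆ n, μ n i) = ⨆ n, Measure.pi (μ n) := by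
  have sigmaFinite_μ (n : κ) (i : ι) : SigmaFinite (μ n i) :=
    Measure.sigmaFinite_of_le _ (le_iSup (fun n => μ n i) n)
  have hμi (i : ι) : Monotone fun n => μ n i := fun _ _ hpq => hμ hpq i
  refine Measure.pi_eq fun s hs => ?_
  calc (⨆ n, Measure.pi (μ n)) (Set.univ.pi s)
      = ⨆ n, Measure.pi (μ n) (Set.univ.pi s) :=
        iSup_measure_apply_of_monotone (fun _ _ hpq => measurePi_mono (hμ hpq)) (.univ_pi hs)
    _ = ⨆ n, ∏ i, μ n i (s i) := by simp only [Measure.pi_pi]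
    _ = ∏ i, ⨆ n, μ n i (s i) :=
        (ennreal_finsetProd_iSup_of_monotone _ fun i _ _ hpq => hμi i hpq (s i)).symm
    _ = ∏ i, (⨆ n, μ n i) (s i) :=
        Finset.prod_congr rfl fun i _ => (iSup_measure_apply_of_monotone (hμi i) (hs i)).symm

theorem pi_tendsto_of_setwise_monotone_limit_general {m : ∀ i, Measure (X i)}
    [∀ i, SigmaFinite (m i)] (hμ : Monotone μ)
    (hlim : ∀ i A, MeasurableSet A → Tendsto (fun n => μ n i A) atTop (𝓝 (m i A))) :
    Monotone (fun n => Measure.pi (μ n)) ∧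
      ∀ A, MeasurableSet A →
        Tendsto (fun n => Measure.pi (μ n) A) atTop (𝓝 (Measure.pi m A)) := by
  have hpi : Monotone fun n => Measure.pi (μ n) := fun _ _ hpq => measurePi_mono (hμ hpq)
  obtain rfl : (fun i => ⨆ n, μ n i) = m :=
    funext fun i => iSup_measure_eq_of_tendsto (fun _ _ hpq => hμ hpq i) (hlim i)
  refine ⟨hpi, fun A hA => ?_⟩
  rw [measurePi_iSup_of_monotone hμ]
  exact tendsto_iSup_measure_apply hpi hA

end ProductMeasures

/-- If `m` is σ-finite and the measures `m n` (each σ-finite, since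
`m n ≤ m`) increase setwise to `m`, then for every `k ≥ 1` the `k`-fold product measures
increase setwise and converge setwise to the `k`-fold product of `m`. -/
theorem pi_tendsto_of_setwise_monotone_limit
    {U : Type*} [MeasurableSpace U] (m : Measure U) [SigmaFinite m]
    (mseq : ℕ → Measure U) [∀ n, SigmaFinite (mseq n)]
    (hmono : ∀ A : Set U, MeasurableSet A → ∀ n : ℕ, mseq n A ≤ mseq (n + 1) A)
    (hlim : ∀ A : Set U, MeasurableSet A →
      Tendsto (fun n => mseq n A) atTop (𝓝 (m A)))
    (k : ℕ) (hk : 1 ≤ k) :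
    (∀ A : Set (Fin k → U), MeasurableSet A → ∀ n : ℕ,
        Measure.pi (fun _ : Fin k => mseq n) A ≤ Measure.pi (fun _ : Fin k => mseq (n + 1)) A) ∧
      (∀ A : Set (Fin k → U), MeasurableSet A →
        Tendsto (fun n => Measure.pi (fun _ : Fin k => mseq n) A) atTop
          (𝓝 (Measure.pi (fun _ : Fin k => m) A))) := by
  have hpi := pi_tendsto_of_setwise_monotone_limit_general (μ := fun n (_ : Fin k) => mseq n)
    (monotone_nat_of_le_succ fun n _ => Measure.le_iff.2 fun A hA => hmono A hA n) fun _ => hlim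
  exact ⟨fun A _ n => hpi.1 n.le_succ A, hpi.2⟩
end

section
/- Under Assumption 2.1, for every fixed k ≥ 1 and every f ∈ L²(μ^k), one has (n/a_n)^{k/2} ∫_{E^k} f dP_n^k → 0 as n → ∞. (Note that f ∈ L²(μ^k) together with (n/a_n)P_n ≤ μ implies f ∈ L²(P_n^k) ⊆ L¹(P_n^k), so the integrals are well defined.) -/
open MeasureTheory Filter Topology
open scoped ENNReal NNReal

/-- **Assumption 2.1** of the paper, for data `(μ, a, P)`. -/
def Assumption21 {E : Type*} [MeasurableSpace E] (μ : Measure E) (a : ℕ → ℝ)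
    (P : ℕ → Measure E) : Prop :=
  μ Set.univ = ∞ ∧
  (∀ n : ℕ, 1 ≤ n → 0 < a n) ∧
  Tendsto a atTop atTop ∧
  Tendsto (fun n : ℕ => a n / n) atTop (𝓝 0) ∧
  (∀ B : Set E, MeasurableSet B → ∀ n : ℕ, 1 ≤ n →
    ENNReal.ofReal ((n : ℝ) / a n) * P n B ≤ ENNReal.ofReal (((n : ℝ) + 1) / a (n + 1)) * P (n + 1) B) ∧
  (∀ B : Set E, MeasurableSet B →
    Tendsto (fun n : ℕ => ENNReal.ofReal ((n : ℝ) / a n) * P n B) atTop (𝓝 (μ B)))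

/-!
Let `c n = n / a n → ∞`. Since `c n • P n` increases to `μ`, it is at most `μ`, and such a
bound passes to product measures: with `d n = (c n ^ k)⁻¹ → 0` we have `P n ^ k ≤ d n • μ ^ k`.
It remains to see that `∫ f ∂Q n = o(d n ^ (1 / p))` whenever the probability measures `Q n`
satisfy `Q n ≤ d n • M` and `f ∈ Lᵖ(M)`, `1 < p < ∞`. By Jensen,
`‖∫ f ∂Q n‖ ≤ d n ^ (1 / p) * ‖f‖_{Lᵖ(M)}`, which is only `O(d n ^ (1 / p))`. But simple functions
in `Lᵖ(M)` are dense and integrable, and for them the same bound with exponent `1` gives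
`O(d n) = o(d n ^ (1 / p))`.
-/

theorem le_inv_smul_of_smul_le {Ω : Type*} [MeasurableSpace Ω] {M Q : Measure Ω} {c : ℝ≥0∞}
    (hc : c ≠ 0) (hc_top : c ≠ ∞) (h : c • Q ≤ M) : Q ≤ c⁻¹ • M := by
  intro s
  rw [Measure.smul_apply, smul_eq_mul, ← ENNReal.inv_mul_le_iff (ENNReal.inv_ne_zero.2 hc_top)
    (ENNReal.inv_ne_top.2 hc), inv_inv]
  exact h s

section Domination

variable {Ω F : Type*} [MeasurableSpace Ω] [NormedAddCommGroup F] [NormedSpace ℝ F]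
  {M : Measure Ω} {p : ℝ≥0∞} {f g : Ω → F}

section SingleMeasure

variable {Q : Measure Ω} [IsProbabilityMeasure Q]

theorem enorm_integral_le_rpow_mul_eLpNorm_of_le_smul {d : ℝ≥0∞} (hQ : Q ≤ d • M) (hp : 1 ≤ p)
    (hf : AEStronglyMeasurable f Q) :
    ‖∫ u, f u ∂Q‖ₑ ≤ d ^ p.toReal⁻¹ * eLpNorm f p M :=
  calc ‖∫ u, f u ∂Q‖ₑ ≤ ∫⁻ u, ‖f u‖ₑ ∂Q := enorm_integral_le_lintegral_enorm f
    _ = eLpNorm f 1 Q := eLpNorm_one_eq_lintegral_enorm.symm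
    _ ≤ eLpNorm f p Q := eLpNorm_le_eLpNorm_of_exponent_le hp hf
    _ ≤ d ^ (1 / p).toReal • eLpNorm f p M := eLpNorm_le_of_measure_le_smul hQ
    _ = d ^ p.toReal⁻¹ * eLpNorm f p M := by rw [one_div, ENNReal.toReal_inv, smul_eq_mul]

theorem enorm_integral_le_rpow_mul_eLpNorm_sub_add {d : ℝ≥0} (hQ : Q ≤ (d : ℝ≥0∞) • M)
    (hp : 1 ≤ p) (hf : MemLp f p M) (hg : MemLp g p M) :
    ‖∫ u, f u ∂Q‖ₑ ≤ (d : ℝ≥0∞) ^ p.toReal⁻¹ * eLpNorm (f - g) p M + d * eLpNorm g 1 M := by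
  have hfQ : MemLp f p Q := hf.of_measure_le_smul ENNReal.coe_ne_top hQ
  have hgQ : MemLp g p Q := hg.of_measure_le_smul ENNReal.coe_ne_top hQ
  have hsplit : ∫ u, f u ∂Q = ∫ u, (f - g) u ∂Q + ∫ u, g u ∂Q := by
    rw [integral_sub' (hfQ.integrable hp) (hgQ.integrable hp), sub_add_cancel]
  rw [hsplit]
  refine (enorm_add_le _ _).trans (add_le_add ?_ ?_)
  · exact enorm_integral_le_rpow_mul_eLpNorm_of_le_smul hQ hp (hfQ.sub hgQ).aestronglyMeasurable
  · simpa using enorm_integral_le_rpow_mul_eLpNorm_of_le_smul hQ le_rfl hgQ.aestronglyMeasurable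

end SingleMeasure

section Family

variable {α : Type*} {l : Filter α} {Q : α → Measure Ω} [∀ n, IsProbabilityMeasure (Q n)]
  {d : α → ℝ≥0}

theorem eventually_enorm_integral_le_mul_rpow (hd : Tendsto d l (𝓝 0))
    (hQ : ∀ᶠ n in l, Q n ≤ (d n : ℝ≥0∞) • M) (hp : 1 < p) (hp_top : p ≠ ∞) (hf : MemLp f p M)
    {ε : ℝ≥0∞} (hε : ε ≠ 0) :
    ∀ᶠ n in l, ‖∫ u, f u ∂Q n‖ₑ ≤ ε * (d n : ℝ≥0∞) ^ p.toReal⁻¹ := by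
  have hε_half : ε / 2 ≠ 0 := (ENNReal.half_pos hε).ne'
  have hr : 0 < 1 - p.toReal⁻¹ :=
    sub_pos.2 (inv_lt_one_of_one_lt₀ (by simpa using ENNReal.toReal_strict_mono hp_top hp))
  obtain ⟨g, hfg, hg⟩ := hf.exists_simpleFunc_eLpNorm_sub_lt hp_top hε_half
  have hg_one : MemLp g 1 M := memLp_one_iff_integrable.2
    ((SimpleFunc.memLp_iff_integrable (zero_lt_one.trans hp).ne' hp_top).1 hg)
  have hsmall : Tendsto (fun n => (d n : ℝ≥0∞) ^ (1 - p.toReal⁻¹) * eLpNorm g 1 M) l (𝓝 0) := by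
    have hd_rpow := (ENNReal.tendsto_coe.2 hd).ennrpow_const (1 - p.toReal⁻¹)
    rw [ENNReal.coe_zero, ENNReal.zero_rpow_of_pos hr] at hd_rpow
    simpa using ENNReal.Tendsto.mul_const hd_rpow (Or.inr hg_one.eLpNorm_ne_top)
  filter_upwards [hQ, ENNReal.tendsto_nhds_zero.1 hsmall _ hε_half.bot_lt] with n hQn hn
  have hfactor : (d n : ℝ≥0∞) = (d n : ℝ≥0∞) ^ p.toReal⁻¹ * (d n : ℝ≥0∞) ^ (1 - p.toReal⁻¹) := by
    rw [← ENNReal.rpow_add_of_nonneg _ _ (by positivity) hr.le, add_sub_cancel, ENNReal.rpow_one]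
  calc ‖∫ u, f u ∂Q n‖ₑ
      ≤ (d n : ℝ≥0∞) ^ p.toReal⁻¹ * eLpNorm (f - ⇑g) p M + d n * eLpNorm g 1 M :=
        enorm_integral_le_rpow_mul_eLpNorm_sub_add hQn hp.le hf hg
    _ = (d n : ℝ≥0∞) ^ p.toReal⁻¹ *
        (eLpNorm (f - ⇑g) p M + (d n : ℝ≥0∞) ^ (1 - p.toReal⁻¹) * eLpNorm g 1 M) := by
        rw [mul_add, ← mul_assoc, ← hfactor]
    _ ≤ (d n : ℝ≥0∞) ^ p.toReal⁻¹ * (ε / 2 + ε / 2) := by gcongr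
    _ = ε * (d n : ℝ≥0∞) ^ p.toReal⁻¹ := by rw [ENNReal.add_halves, mul_comm]

theorem integral_isLittleO_rpow_of_le_smul (hd : Tendsto d l (𝓝 0))
    (hQ : ∀ᶠ n in l, Q n ≤ (d n : ℝ≥0∞) • M) (hp : 1 < p) (hp_top : p ≠ ∞) (hf : MemLp f p M) :
    (fun n => ∫ u, f u ∂Q n) =o[l] fun n => (d n : ℝ) ^ p.toReal⁻¹ := by
  refine Asymptotics.isLittleO_iff.2 fun ε hε => ?_
  lift ε to ℝ≥0 using hε.le
  have hε_ne : (ε : ℝ≥0∞) ≠ 0 := by simpa using hε.ne'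
  filter_upwards [eventually_enorm_integral_le_mul_rpow hd hQ hp hp_top hf hε_ne] with n hn
  rw [← ENNReal.coe_rpow_of_nonneg _ (by positivity), ← ENNReal.coe_mul, enorm_le_coe] at hn
  rw [Real.norm_of_nonneg (by positivity)]
  exact_mod_cast hn

end Family

end Domination

section Product

variable {ι : Type*} [Fintype ι] {X : ι → Type*} [∀ i, MeasurableSpace (X i)]
  {μ : ∀ i, Measure (X i)}

theorem prod_smul_pi_le_pi {ν : ∀ i, Measure (X i)} [∀ i, SigmaFinite (ν i)] {c : ι → ℝ≥0∞}
    (h : ∀ i, c i • ν i ≤ μ i) : (∏ i, c i) • Measure.pi ν ≤ Measure.pi μ := by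
  have houter : ((∏ i, c i) • Measure.pi ν).toOuterMeasure ≤
      OuterMeasure.pi fun i => (μ i).toOuterMeasure := by
    refine OuterMeasure.le_pi.2 fun s _ => ?_
    change (∏ i, c i) * Measure.pi ν (Set.univ.pi s) ≤ ∏ i, μ i (s i)
    rw [Measure.pi_pi, ← Finset.prod_mul_distrib]
    exact Finset.prod_le_prod' fun i _ => h i (s i)
  refine Measure.le_iff.2 fun s hs => ?_
  rw [Measure.pi_def μ, toMeasure_apply _ _ hs]
  exact houter s

theorem pi_le_inv_pow_smul_pi {ν : ∀ i, Measure (X i)} [∀ i, SigmaFinite (ν i)] {c : ℝ}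
    (hc : 0 < c) (h : ∀ i, ENNReal.ofReal c • ν i ≤ μ i) :
    Measure.pi ν ≤ ENNReal.ofReal (c ^ Fintype.card ι)⁻¹ • Measure.pi μ := by
  rw [ENNReal.ofReal_inv_of_pos (by positivity), ENNReal.ofReal_pow hc.le]
  refine le_inv_smul_of_smul_le (by simp [hc]) (by finiteness) ?_
  simpa using prod_smul_pi_le_pi h

theorem sqrt_pow_mul_integral_pi_tendsto_zero_general [Nonempty ι] {F : Type*}
    [NormedAddCommGroup F] [NormedSpace ℝ F] {α : Type*} {l : Filter α}
    {P : α → ∀ i, Measure (X i)} [∀ n i, IsProbabilityMeasure (P n i)] {c : α → ℝ}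
    (hc : Tendsto c l atTop) (hP : ∀ᶠ n in l, ∀ i, ENNReal.ofReal (c n) • P n i ≤ μ i)
    {p : ℝ≥0∞} (hp : 1 < p) (hp_top : p ≠ ∞) {f : (∀ i, X i) → F}
    (hf : MemLp f p (Measure.pi μ)) :
    Tendsto (fun n => (c n ^ p.toReal⁻¹) ^ Fintype.card ι • ∫ u, f u ∂Measure.pi (P n))
      l (𝓝 0) := by
  have hc_pos : ∀ᶠ n in l, 0 < c n := hc.eventually_gt_atTop 0
  have hd : Tendsto (fun n => (c n ^ Fintype.card ι)⁻¹.toNNReal) l (𝓝 0) := by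
    simpa using tendsto_real_toNNReal
      ((tendsto_pow_atTop Fintype.card_ne_zero).comp hc).inv_tendsto_atTop
  have hpi : ∀ᶠ n in l,
      Measure.pi (P n) ≤ ENNReal.ofReal (c n ^ Fintype.card ι)⁻¹ • Measure.pi μ := by
    filter_upwards [hc_pos, hP] with n hcn hPn
    exact pi_le_inv_pow_smul_pi hcn hPn
  have hlittleO := integral_isLittleO_rpow_of_le_smul hd hpi hp hp_top hf
  refine hlittleO.tendsto_inv_smul_nhds_zero.congr' ?_
  filter_upwards [hc_pos] with n hcn
  rw [Real.coe_toNNReal _ (by positivity), Real.inv_rpow (by positivity), inv_inv,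
    Real.rpow_pow_comm hcn.le]

end Product

namespace Assumption21

variable {E : Type*} [MeasurableSpace E] {μ : Measure E} {a : ℕ → ℝ} {P : ℕ → Measure E}

theorem smul_le (h : Assumption21 μ a P) {n : ℕ} (hn : 1 ≤ n) :
    ENNReal.ofReal (n / a n) • P n ≤ μ := by
  obtain ⟨-, -, -, -, hmono, hlim⟩ := h
  refine Measure.le_iff.2 fun B hB => ?_
  have hmonoOn : MonotoneOn (fun m : ℕ => ENNReal.ofReal (m / a m) * P m B) {m | 1 ≤ m} :=
    monotoneOn_nat_Ici_of_le_succ fun m hm => by simpa using hmono B hB m hm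
  refine ge_of_tendsto (hlim B hB) ?_
  filter_upwards [eventually_ge_atTop n] with m hm
  exact hmonoOn hn (hn.trans hm) hm

theorem tendsto_div_atTop (h : Assumption21 μ a P) :
    Tendsto (fun n : ℕ => n / a n) atTop atTop := by
  obtain ⟨-, ha_pos, -, hlim, -, -⟩ := h
  have hpos : ∀ᶠ n : ℕ in atTop, a n / n ∈ Set.Ioi 0 := by
    filter_upwards [eventually_ge_atTop 1] with n hn
    exact div_pos (ha_pos n hn) (by exact_mod_cast hn)
  simpa [Pi.inv_def] using (tendsto_nhdsWithin_iff.2 ⟨hlim, hpos⟩).inv_tendsto_nhdsGT_zero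

end Assumption21

/-- Under Assumption 2.1, for fixed `k ≥ 1` and `f ∈ L²(μ^k)`,
`(n/a_n)^{k/2} ∫_{E^k} f dP_n^k → 0` as `n → ∞`. -/
theorem sqrt_pow_mul_integral_pi_tendsto_zero
    {E : Type*} [MeasurableSpace E] (μ : Measure E) [SigmaFinite μ] [NullSingletonClass μ]
    (a : ℕ → ℝ) (P : ℕ → Measure E) [∀ n, IsProbabilityMeasure (P n)]
    (h21 : Assumption21 μ a P)
    (k : ℕ) (hk : 1 ≤ k) (f : (Fin k → E) → ℝ)
    (hf : MemLp f 2 (Measure.pi fun _ : Fin k => μ)) :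
    Tendsto (fun n : ℕ =>
        Real.sqrt ((n : ℝ) / a n) ^ k * ∫ u, f u ∂(Measure.pi fun _ : Fin k => P n))
      atTop (𝓝 0) := by
  have : NeZero k := ⟨Nat.one_le_iff_ne_zero.1 hk⟩
  have hP : ∀ᶠ n : ℕ in atTop, ∀ _ : Fin k, ENNReal.ofReal (n / a n) • P n ≤ μ :=
    (eventually_ge_atTop 1).mono fun _ hn _ => h21.smul_le hn
  simpa [Real.sqrt_eq_rpow] using sqrt_pow_mul_integral_pi_tendsto_zero_general
    h21.tendsto_div_atTop hP ENNReal.one_lt_two ENNReal.ofNat_ne_top hf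
end

section
/- Under Assumption 2.1, let g = Σ_{k=1}^m c_k 𝟙_{B_k} with c_k ∈ ℝ and B_k ∈ 𝓔 satisfying μ(B_k) < ∞. Then (n/a_n)·(∫_E g² dP_n − (∫_E g dP_n)²) → ∫_E g² dμ as n → ∞. -/
open MeasureTheory Filter Topology
open scoped ENNReal NNReal

/-!
With `μₙ = (n / aₙ) • Pₙ` the normalized variance is `∫ g² ∂μₙ - (aₙ / n) * (∫ g ∂μₙ)²`. Both `g`
and `g²` are `μ`-integrable simple functions, and the integral of such a function is a finite linear
combination of measures of sets of finite `μ`-measure, so both integrals converge to those against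
`μ`; the squared mean then vanishes in the limit because `aₙ / n → 0`.
-/

section SetwiseConvergence

variable {ι E F : Type*} [MeasurableSpace E] [NormedAddCommGroup F]
  {μ : Measure E} {ν : ι → Measure E} {l : Filter ι}

theorem eventually_integrable_simpleFunc_of_tendsto_measure
    (hν : ∀ B, MeasurableSet B → μ B < ∞ → Tendsto (fun i ↦ ν i B) l (𝓝 (μ B)))
    {f : SimpleFunc E F} (hf : Integrable f μ) : ∀ᶠ i in l, Integrable f (ν i) := by
  have hsupport : μ (Function.support f) < ∞ := f.measure_support_lt_top_of_integrable hf
  filter_upwards [(hν _ f.measurableSet_support hsupport).eventually_lt_const hsupport] with i hi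
  exact SimpleFunc.integrable_iff_finMeasSupp.2 (SimpleFunc.finMeasSupp_iff_support.2 hi)

theorem tendsto_integral_simpleFunc_of_tendsto_measure [NormedSpace ℝ F] [CompleteSpace F]
    (hν : ∀ B, MeasurableSet B → μ B < ∞ → Tendsto (fun i ↦ ν i B) l (𝓝 (μ B)))
    {f : SimpleFunc E F} (hf : Integrable f μ) :
    Tendsto (fun i ↦ ∫ x, f x ∂ν i) l (𝓝 (∫ x, f x ∂μ)) := by
  classical
  have hsum : Tendsto (fun i ↦ f.integral (ν i)) l (𝓝 (f.integral μ)) := by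
    simp only [SimpleFunc.integral_eq_sum_filter]
    refine tendsto_finsetSum _ fun y hy ↦ ?_
    have hfiber := f.measure_preimage_lt_top_of_integrable hf (Finset.mem_filter.1 hy).2
    exact ((ENNReal.tendsto_toReal hfiber.ne).comp
      (hν _ (f.measurableSet_fiber y) hfiber)).smul_const y
  rw [← f.integral_eq_integral hf]
  refine hsum.congr' ?_
  filter_upwards [eventually_integrable_simpleFunc_of_tendsto_measure hν hf] with i hi
  exact f.integral_eq_integral hi

end SetwiseConvergence

theorem simpleFunc_coe_sum {κ E F : Type*} [MeasurableSpace E] [AddCommMonoid F] (s : Finset κ)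
    (f : κ → SimpleFunc E F) : ⇑(∑ k ∈ s, f k) = ∑ k ∈ s, ⇑(f k) :=
  map_sum (⟨⟨(⇑), SimpleFunc.coe_zero⟩, SimpleFunc.coe_add⟩ : SimpleFunc E F →+ (E → F)) f s

theorem exists_integrable_simpleFunc_eq_sum_indicator {κ E F : Type*} [MeasurableSpace E]
    [NormedAddCommGroup F] {μ : Measure E} (s : Finset κ) (c : κ → F) {B : κ → Set E}
    (hB : ∀ k ∈ s, MeasurableSet (B k)) (hμB : ∀ k ∈ s, μ (B k) < ∞) :
    ∃ f : SimpleFunc E F, Integrable f μ ∧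
      ⇑f = fun x ↦ ∑ k ∈ s, (B k).indicator (fun _ ↦ c k) x := by
  have hcoe : ⇑(∑ k ∈ s, (SimpleFunc.const E (c k)).restrict (B k)) =
      fun x ↦ ∑ k ∈ s, (B k).indicator (fun _ ↦ c k) x := by
    ext x
    rw [simpleFunc_coe_sum, Finset.sum_apply]
    exact Finset.sum_congr rfl fun k hk ↦ congrFun (SimpleFunc.coe_restrict _ (hB k hk)) x
  refine ⟨_, ?_, hcoe⟩
  rw [hcoe]
  exact integrable_finsetSum s fun k hk ↦
    (integrableOn_const (hμB k hk).ne).integrable_indicator (hB k hk)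

theorem Assumption21.tendsto_div_atTop_s7 {E : Type*} [MeasurableSpace E] {μ : Measure E}
    {a : ℕ → ℝ} {P : ℕ → Measure E} (h : Assumption21 μ a P) :
    Tendsto (fun n : ℕ ↦ (n : ℝ) / a n) atTop atTop := by
  obtain ⟨-, ha_pos, -, ha_div, -, -⟩ := h
  have ha_div_pos : ∀ᶠ n : ℕ in atTop, a n / n ∈ Set.Ioi 0 := by
    filter_upwards [eventually_ge_atTop 1] with n hn
    exact div_pos (ha_pos n hn) (Nat.cast_pos.2 hn)
  simpa only [Pi.inv_def, inv_div] using
    (tendsto_nhdsWithin_iff.2 ⟨ha_div, ha_div_pos⟩).inv_tendsto_nhdsGT_zero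

theorem variance_simple_tendsto_general {ι E : Type*} [MeasurableSpace E] {l : Filter ι}
    {μ : Measure E} {P : ι → Measure E} {r : ι → ℝ} (hr : Tendsto r l atTop)
    (hP : ∀ B, MeasurableSet B → μ B < ∞ →
      Tendsto (fun i ↦ ENNReal.ofReal (r i) * P i B) l (𝓝 (μ B)))
    {f : SimpleFunc E ℝ} (hf : Integrable f μ) :
    Tendsto (fun i ↦ r i * ((∫ x, f x ^ 2 ∂P i) - (∫ x, f x ∂P i) ^ 2)) l
      (𝓝 (∫ x, f x ^ 2 ∂μ)) := by
  let ν (i : ι) : Measure E := ENNReal.ofReal (r i) • P i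
  have hmean : Tendsto (fun i ↦ ∫ x, f x ∂ν i) l (𝓝 (∫ x, f x ∂μ)) :=
    tendsto_integral_simpleFunc_of_tendsto_measure hP hf
  have hf_sq : Integrable (f ^ 2 : SimpleFunc E ℝ) μ :=
    ((SimpleFunc.memLp_iff_integrable two_ne_zero ENNReal.ofNat_ne_top).2 hf).integrable_sq
  have hsecond : Tendsto (fun i ↦ ∫ x, f x ^ 2 ∂ν i) l (𝓝 (∫ x, f x ^ 2 ∂μ)) :=
    tendsto_integral_simpleFunc_of_tendsto_measure hP hf_sq
  have hlim : Tendsto (fun i ↦ (∫ x, f x ^ 2 ∂ν i) - (r i)⁻¹ * (∫ x, f x ∂ν i) ^ 2) l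
      (𝓝 (∫ x, f x ^ 2 ∂μ)) := by
    simpa only [zero_mul, sub_zero, Function.comp_apply] using
      hsecond.sub ((tendsto_inv_atTop_zero.comp hr).mul (hmean.pow 2))
  refine hlim.congr' ?_
  filter_upwards [hr.eventually_gt_atTop 0] with i hi
  simp only [ν, integral_smul_measure, ENNReal.toReal_ofReal hi.le, smul_eq_mul]
  field_simp

/-- Under Assumption 2.1, for a simple function
`g = Σ_{k=1}^m c_k 𝟙_{B_k}` with `μ(B_k) < ∞`, the normalized variance
`(n/a_n)(∫ g² dP_n − (∫ g dP_n)²)` converges to `∫ g² dμ`. -/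
theorem variance_simple_tendsto
    {E : Type*} [MeasurableSpace E] (μ : Measure E) [SigmaFinite μ] [NullSingletonClass μ]
    (a : ℕ → ℝ) (P : ℕ → Measure E) [∀ n, IsProbabilityMeasure (P n)]
    (h21 : Assumption21 μ a P)
    (m : ℕ) (c : Fin m → ℝ) (B : Fin m → Set E)
    (hBmeas : ∀ i, MeasurableSet (B i)) (hBfin : ∀ i, μ (B i) < ∞)
    (g : E → ℝ) (hgdef : g = fun x => ∑ i : Fin m, Set.indicator (B i) (fun _ => c i) x) :
    Tendsto (fun n : ℕ =>
        ((n : ℝ) / a n) * ((∫ x, g x ^ 2 ∂(P n)) - (∫ x, g x ∂(P n)) ^ 2))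
      atTop (𝓝 (∫ x, g x ^ 2 ∂μ)) := by
  have ⟨_, _, _, _, _, hlim⟩ := h21
  obtain ⟨f, hf, rfl⟩ : ∃ f : SimpleFunc E ℝ, Integrable f μ ∧ ⇑f = g := hgdef ▸
    exists_integrable_simpleFunc_eq_sum_indicator .univ c (fun i _ ↦ hBmeas i) fun i _ ↦ hBfin i
  exact variance_simple_tendsto_general h21.tendsto_div_atTop_s7 (fun A hA _ ↦ hlim A hA) hf
end

section
/- Under Assumption 2.1, for each n let X_{n,1}, …, X_{n,n} be i.i.d. E-valued random variables with common law P_n. Let g = Σ_{k=1}^m c_k 𝟙_{B_k} with c_k ∈ ℝ and B_k ∈ 𝓔 satisfying μ(B_k) < ∞. Then a_n^{-1/2} Σ_{j=1}^n (g(X_{n,j}) − ∫_E g dP_n) converges in distribution, as n → ∞, to the Gaussian distribution with mean 0 and variance ∫_E g² dμ (interpreted as the Dirac mass at 0 if ∫_E g² dμ = 0). -/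
open MeasureTheory ProbabilityTheory Filter Topology
open scoped ENNReal NNReal

/-!
Writing `r n = n / a n`, setwise convergence of `r n • P n` to `μ` gives `r n * ∫ g dP n → ∫ g dμ`
for every `μ`-integrable simple function `g`, and likewise for `g ^ 2`. Since `r n → ∞`, the term
`r n * (∫ g dP n) ^ 2` vanishes in the limit, so `r n * Var[g; P n] → ∫ g ^ 2 dμ`. This is the limit
of the variance of the normalised sum, whose summands are uniformly of order `1 / √(a n) → 0`.
The second-order Taylor expansion of their common characteristic function, raised to the `n`-th
power, then yields the Gaussian limit through Lévy's continuity theorem.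
-/

lemma norm_cexp_mul_I_sub_le (x : ℝ) :
    ‖Complex.exp (x * Complex.I) - (1 + x * Complex.I - (x ^ 2 / 2 : ℝ))‖
      ≤ |x| ^ 3 * Real.exp |x| := by
  have taylor_sum : ∑ k ∈ Finset.range 3, (x * Complex.I) ^ k / (k.factorial : ℂ)
      = 1 + x * Complex.I - (x ^ 2 / 2 : ℝ) := by
    simp only [Finset.sum_range_succ, Finset.sum_range_zero, mul_pow, Complex.I_sq,
      Nat.factorial]
    push_cast
    ring
  rw [← taylor_sum]
  simpa using Complex.norm_exp_sub_sum_le_norm_mul_exp (x * Complex.I) 3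

section CharFun

variable {Q : Measure ℝ} [IsProbabilityMeasure Q]

lemma integrable_and_integral_taylor_cexp_mul_I (hQ : MemLp id 2 Q) (t : ℝ) :
    Integrable (fun y : ℝ => 1 + (t * y : ℝ) * Complex.I - ((t * y) ^ 2 / 2 : ℝ)) Q ∧
    ∫ y, (1 + (t * y : ℝ) * Complex.I - ((t * y) ^ 2 / 2 : ℝ)) ∂Q
      = 1 + (t * ∫ y, y ∂Q : ℝ) * Complex.I - (t ^ 2 / 2 * ∫ y, y ^ 2 ∂Q : ℝ) := by
  have int_linear : Integrable (fun y : ℝ => ((t * y : ℝ) : ℂ) * Complex.I) Q :=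
    ((hQ.integrable one_le_two).const_mul t).ofReal.mul_const _
  have int_one_add : Integrable (fun y : ℝ => 1 + ((t * y : ℝ) : ℂ) * Complex.I) Q :=
    (integrable_const _).add int_linear
  have int_quadratic : Integrable (fun y : ℝ => (((t * y) ^ 2 / 2 : ℝ) : ℂ)) Q := by
    simp only [mul_pow, mul_div_right_comm]
    exact (hQ.integrable_sq.const_mul _).ofReal
  refine ⟨int_one_add.sub int_quadratic, ?_⟩
  rw [integral_sub int_one_add int_quadratic, integral_add (integrable_const _) int_linear,
    integral_mul_const, integral_complex_ofReal, integral_complex_ofReal, integral_const_mul]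
  simp only [mul_pow, mul_div_right_comm, integral_const_mul, integral_const, probReal_univ,
    one_smul]

lemma norm_charFun_sub_le_of_ae_abs_le {K : ℝ} (hK : ∀ᵐ y ∂Q, |y| ≤ K)
    (hmean : ∫ y, y ∂Q = 0) (t : ℝ) :
    ‖charFun Q t - (1 - t ^ 2 / 2 * ∫ y, y ^ 2 ∂Q : ℝ)‖
      ≤ |t| ^ 3 * K * Real.exp (|t| * K) * ∫ y, y ^ 2 ∂Q := by
  have memLp_id : MemLp id 2 Q := .of_bound aestronglyMeasurable_id K hK
  obtain ⟨int_taylor, integral_taylor⟩ := integrable_and_integral_taylor_cexp_mul_I memLp_id t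
  have int_exp : Integrable (fun y : ℝ => Complex.exp ((t * y : ℝ) * Complex.I)) Q :=
    .of_bound (by fun_prop) 1 (.of_forall fun y => (Complex.norm_exp_ofReal_mul_I _).le)
  have charFun_sub_eq : charFun Q t - (1 - t ^ 2 / 2 * ∫ y, y ^ 2 ∂Q : ℝ)
      = ∫ y : ℝ, (Complex.exp ((t * y : ℝ) * Complex.I)
          - (1 + (t * y : ℝ) * Complex.I - ((t * y) ^ 2 / 2 : ℝ))) ∂Q := by
    rw [integral_sub int_exp int_taylor, integral_taylor, hmean, charFun_apply_real]
    simp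
  rw [charFun_sub_eq, ← integral_const_mul]
  refine norm_integral_le_of_norm_le (memLp_id.integrable_sq.const_mul _) ?_
  filter_upwards [hK] with y hy
  have K_nonneg : 0 ≤ K := (abs_nonneg y).trans hy
  calc _ ≤ |t * y| ^ 3 * Real.exp |t * y| := norm_cexp_mul_I_sub_le (t * y)
    _ = |t| ^ 3 * |y| * Real.exp (|t| * |y|) * y ^ 2 := by
        rw [abs_mul, ← sq_abs y]
        ring
    _ ≤ |t| ^ 3 * K * Real.exp (|t| * K) * y ^ 2 := by gcongr

end CharFun

section TriangularArray

variable {Q : ℕ → Measure ℝ} [∀ n, IsProbabilityMeasure (Q n)] {K : ℕ → ℝ} {v : ℝ≥0}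

lemma tendsto_mul_charFun_sub_one_of_ae_abs_le (hbound : ∀ n, ∀ᵐ y ∂Q n, |y| ≤ K n)
    (hK : Tendsto K atTop (𝓝 0)) (hmean : ∀ n, ∫ y, y ∂Q n = 0)
    (hvar : Tendsto (fun n : ℕ => n * ∫ y, y ^ 2 ∂Q n) atTop (𝓝 v)) (t : ℝ) :
    Tendsto (fun n : ℕ => (n : ℂ) * (charFun (Q n) t - 1)) atTop
      (𝓝 ((-(t ^ 2 / 2) * v : ℝ) : ℂ)) := by
  set V : ℕ → ℝ := fun n => ∫ y, y ^ 2 ∂Q n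
  have main_term : Tendsto (fun n : ℕ => ((-(t ^ 2 / 2) * (n * V n) : ℝ) : ℂ)) atTop
      (𝓝 ((-(t ^ 2 / 2) * v : ℝ) : ℂ)) :=
    (Complex.continuous_ofReal.tendsto _).comp (hvar.const_mul _)
  have error_bound :
      Tendsto (fun n : ℕ => |t| ^ 3 * K n * Real.exp (|t| * K n) * (n * V n)) atTop (𝓝 0) := by
    have exp_tendsto := (Real.continuous_exp.tendsto _).comp (hK.const_mul |t|)
    simpa using ((hK.const_mul (|t| ^ 3)).mul exp_tendsto).mul hvar
  have error_term : Tendsto (fun n : ℕ =>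
      (n : ℂ) * (charFun (Q n) t - 1) - ((-(t ^ 2 / 2) * (n * V n) : ℝ) : ℂ)) atTop (𝓝 0) := by
    refine squeeze_zero_norm (fun n => ?_) error_bound
    calc _ = ‖(n : ℂ) * (charFun (Q n) t - (1 - t ^ 2 / 2 * V n : ℝ))‖ := by
          congr 1
          push_cast
          ring
      _ = n * ‖charFun (Q n) t - (1 - t ^ 2 / 2 * V n : ℝ)‖ := by
          rw [norm_mul, Complex.norm_natCast]
      _ ≤ n * (|t| ^ 3 * K n * Real.exp (|t| * K n) * V n) := by
          gcongr
          exact norm_charFun_sub_le_of_ae_abs_le (hbound n) (hmean n) t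
      _ = _ := by ring
  simpa using error_term.add main_term

lemma tendsto_charFun_pow_of_ae_abs_le (hbound : ∀ n, ∀ᵐ y ∂Q n, |y| ≤ K n)
    (hK : Tendsto K atTop (𝓝 0)) (hmean : ∀ n, ∫ y, y ∂Q n = 0)
    (hvar : Tendsto (fun n : ℕ => n * ∫ y, y ^ 2 ∂Q n) atTop (𝓝 v)) (t : ℝ) :
    Tendsto (fun n => charFun (Q n) t ^ n) atTop (𝓝 (charFun (gaussianReal 0 v) t)) := by
  have gaussian_eq :
      charFun (gaussianReal 0 v) t = Complex.exp ((-(t ^ 2 / 2) * v : ℝ) : ℂ) := by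
    rw [charFun_gaussianReal]
    congr 1
    push_cast
    ring
  simpa only [gaussian_eq, add_sub_cancel] using
    Complex.tendsto_one_add_pow_exp_of_tendsto
      (tendsto_mul_charFun_sub_one_of_ae_abs_le hbound hK hmean hvar t)

theorem tendstoInDistribution_sum_of_ae_abs_le {Ω : ℕ → Type*} [∀ n, MeasurableSpace (Ω n)]
    {Pr : ∀ n, Measure (Ω n)} [∀ n, IsProbabilityMeasure (Pr n)] {Y : ∀ n, Fin n → Ω n → ℝ}
    (hlaw : ∀ n j, HasLaw (Y n j) (Q n) (Pr n)) (hindep : ∀ n, iIndepFun (Y n) (Pr n))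
    (hbound : ∀ n, ∀ᵐ y ∂Q n, |y| ≤ K n) (hK : Tendsto K atTop (𝓝 0))
    (hmean : ∀ n, ∫ y, y ∂Q n = 0)
    (hvar : Tendsto (fun n : ℕ => n * ∫ y, y ^ 2 ∂Q n) atTop (𝓝 v)) :
    TendstoInDistribution (fun n ω => ∑ j, Y n j ω) atTop id Pr (gaussianReal 0 v) where
  forall_aemeasurable n := Finset.aemeasurable_fun_sum _ fun j _ => (hlaw n j).aemeasurable
  tendsto := by
    refine ProbabilityMeasure.tendsto_iff_tendsto_charFun.2 fun t => ?_
    have charFun_sum (n : ℕ) :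
        charFun ((Pr n).map fun ω => ∑ j, Y n j ω) t = charFun (Q n) t ^ n := by
      rw [(hindep n).charFun_map_fun_sum_eq_prod fun j => (hlaw n j).aemeasurable]
      simp [(hlaw n _).map_eq]
    simpa [charFun_sum] using tendsto_charFun_pow_of_ae_abs_le hbound hK hmean hvar t

end TriangularArray

lemma tendsto_integral_comp_of_tendstoInDistribution {ι S Ω' : Type*} {Ω : ι → Type*}
    [TopologicalSpace S] [MeasurableSpace S] [OpensMeasurableSpace S]
    [∀ i, MeasurableSpace (Ω i)] [MeasurableSpace Ω'] {Pr : ∀ i, Measure (Ω i)}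
    [∀ i, IsProbabilityMeasure (Pr i)] {Pr' : Measure Ω'} [IsProbabilityMeasure Pr']
    {Y : ∀ i, Ω i → S} {Z : Ω' → S} {l : Filter ι} (h : TendstoInDistribution Y l Z Pr Pr')
    (φ : BoundedContinuousFunction S ℝ) :
    Tendsto (fun i => ∫ ω, φ (Y i ω) ∂Pr i) l (𝓝 (∫ ω, φ (Z ω) ∂Pr')) := by
  have weak := ProbabilityMeasure.tendsto_iff_forall_integral_tendsto.1 h.tendsto φ
  simp only [ProbabilityMeasure.coe_mk] at weak
  rw [integral_map h.aemeasurable_limit φ.continuous.measurable.aestronglyMeasurable] at weak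
  refine weak.congr fun i => ?_
  exact integral_map (h.forall_aemeasurable i) φ.continuous.measurable.aestronglyMeasurable

section Moments

variable {E ι : Type*} [MeasurableSpace E] {μ : Measure E} {ν : ι → Measure E} {r : ι → ℝ}
  {l : Filter ι}

lemma tendsto_mul_measureReal {A : Set E} (hr : ∀ᶠ i in l, 0 ≤ r i) (hA : μ A ≠ ∞)
    (hlim : Tendsto (fun i => ENNReal.ofReal (r i) * ν i A) l (𝓝 (μ A))) :
    Tendsto (fun i => r i * (ν i).real A) l (𝓝 (μ.real A)) := by
  refine ((ENNReal.tendsto_toReal hA).comp hlim).congr' ?_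
  filter_upwards [hr] with i hi
  simp [ENNReal.toReal_ofReal hi, measureReal_def]

lemma tendsto_mul_integral_simpleFunc [∀ i, IsFiniteMeasure (ν i)]
    (hlim : ∀ A, MeasurableSet A → μ A < ∞ →
      Tendsto (fun i => r i * (ν i).real A) l (𝓝 (μ.real A)))
    (f : SimpleFunc E ℝ) (hf : Integrable f μ) :
    Tendsto (fun i => r i * ∫ x, f x ∂ν i) l (𝓝 (∫ x, f x ∂μ)) := by
  rw [← f.integral_eq_integral hf, f.integral_eq]
  simp only [← f.integral_eq_integral (f.integrable_of_isFiniteMeasure), f.integral_eq,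
    Finset.mul_sum, smul_eq_mul, ← mul_assoc]
  refine tendsto_finsetSum _ fun y _ => ?_
  obtain rfl | hy := eq_or_ne y 0
  · simp [tendsto_const_nhds]
  · exact (hlim _ (f.measurableSet_fiber y)
      (f.measure_preimage_lt_top_of_integrable hf hy)).mul_const y

lemma tendsto_mul_variance [∀ i, IsProbabilityMeasure (ν i)] {g : E → ℝ} {m s : ℝ}
    (hg : ∀ i, MemLp g 2 (ν i)) (hr : Tendsto (fun i => (r i)⁻¹) l (𝓝 0))
    (hmean : Tendsto (fun i => r i * ∫ x, g x ∂ν i) l (𝓝 m))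
    (hsq : Tendsto (fun i => r i * ∫ x, g x ^ 2 ∂ν i) l (𝓝 s)) :
    Tendsto (fun i => r i * Var[g; ν i]) l (𝓝 s) := by
  have lim := hsq.sub (hr.mul (hmean.pow 2))
  rw [zero_mul, sub_zero] at lim
  refine lim.congr fun i => ?_
  rw [variance_eq_sub (hg i)]
  simp only [Pi.pow_apply]
  obtain h | h := eq_or_ne (r i) 0
  · simp [h]
  · field_simp

end Moments

lemma exists_simpleFunc_eq_sum_indicator {E ι : Type*} [MeasurableSpace E] {μ : Measure E}
    [Fintype ι] (c : ι → ℝ) {B : ι → Set E} (hB : ∀ i, MeasurableSet (B i))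
    (hμB : ∀ i, μ (B i) < ∞) :
    ∃ f : SimpleFunc E ℝ,
      ⇑f = (fun x => ∑ i, (B i).indicator (fun _ => c i) x) ∧ Integrable f μ := by
  classical
  have hsum (s : Finset ι) : ∃ f : SimpleFunc E ℝ,
      ⇑f = (fun x => ∑ i ∈ s, (B i).indicator (fun _ => c i) x) := by
    induction s using Finset.induction_on with
    | empty => exact ⟨0, by ext; simp⟩
    | insert i s hi ih =>
      obtain ⟨f, hf⟩ := ih
      refine ⟨(SimpleFunc.const E (c i)).restrict (B i) + f, ?_⟩
      ext x
      rw [SimpleFunc.coe_add, Pi.add_apply, SimpleFunc.restrict_apply _ (hB i), hf,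
        Finset.sum_insert hi]
      rfl
  obtain ⟨f, hf⟩ := hsum Finset.univ
  refine ⟨f, hf, hf ▸ integrable_finsetSum _ fun i _ => ?_⟩
  exact (integrable_indicator_iff (hB i)).2 (integrableOn_const (hμB i).ne)

lemma abs_sub_integral_le_of_abs_le {E : Type*} [MeasurableSpace E] (Q : Measure E)
    [IsProbabilityMeasure Q] {g : E → ℝ} {C : ℝ} (hC : ∀ x, |g x| ≤ C) (x : E) :
    |g x - ∫ x, g x ∂Q| ≤ 2 * C := by
  have mean_le : |∫ x, g x ∂Q| ≤ C := by
    simpa using norm_integral_le_of_norm_le_const (μ := Q) (f := g) (.of_forall hC)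
  linarith [abs_sub (g x) (∫ x, g x ∂Q), hC x]

section NormalizedSum

variable {E : Type*} [MeasurableSpace E] {Ω : ℕ → Type*} [∀ n, MeasurableSpace (Ω n)]
  {Pr : ∀ n, Measure (Ω n)} [∀ n, IsProbabilityMeasure (Pr n)]
  {P : ℕ → Measure E} [∀ n, IsProbabilityMeasure (P n)] {X : ∀ n, Fin n → Ω n → E} {a : ℕ → ℝ}

theorem tendstoInDistribution_inv_sqrt_mul_sum_of_abs_le
    (ha : Tendsto a atTop atTop) (hlaw : ∀ n j, HasLaw (X n j) (P n) (Pr n))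
    (hindep : ∀ n, iIndepFun (X n) (Pr n)) {g : E → ℝ} (hg : Measurable g) {C : ℝ}
    (hC : ∀ x, |g x| ≤ C) {v : ℝ≥0}
    (hvar : Tendsto (fun n : ℕ => n / a n * Var[g; P n]) atTop (𝓝 v)) :
    TendstoInDistribution (fun n ω => (√(a n))⁻¹ * ∑ j, (g (X n j ω) - ∫ x, g x ∂P n)) atTop id
      Pr (gaussianReal 0 v) := by
  set Y : ℕ → E → ℝ := fun n x => (√(a n))⁻¹ * (g x - ∫ x, g x ∂P n) with hY
  have hYmeas (n : ℕ) : Measurable (Y n) := by fun_prop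
  have (n : ℕ) : IsProbabilityMeasure ((P n).map (Y n)) :=
    Measure.isProbabilityMeasure_map (hYmeas n).aemeasurable
  have hbound (n : ℕ) : ∀ᵐ y ∂(P n).map (Y n), |y| ≤ (√(a n))⁻¹ * (2 * C) := by
    refine (ae_map_iff (hYmeas n).aemeasurable (by measurability)).2 (.of_forall fun x => ?_)
    rw [hY, abs_mul, abs_of_nonneg (by positivity)]
    gcongr
    exact abs_sub_integral_le_of_abs_le (P n) hC x
  have hK : Tendsto (fun n => (√(a n))⁻¹ * (2 * C)) atTop (𝓝 0) := by
    simpa using (tendsto_inv_atTop_zero.comp (Real.tendsto_sqrt_atTop.comp ha)).mul_const (2 * C)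
  have hmean (n : ℕ) : ∫ y, y ∂(P n).map (Y n) = 0 := by
    rw [integral_map (hYmeas n).aemeasurable (by fun_prop), integral_const_mul,
      integral_sub (.of_bound hg.aestronglyMeasurable C (.of_forall hC)) (integrable_const _)]
    simp
  have hsq : ∀ᶠ n : ℕ in atTop,
      n / a n * Var[g; P n] = n * ∫ y, y ^ 2 ∂(P n).map (Y n) := by
    filter_upwards [ha.eventually_ge_atTop 0] with n hn
    rw [integral_map (hYmeas n).aemeasurable (by fun_prop), variance_eq_integral hg.aemeasurable]
    simp only [hY, mul_pow, integral_const_mul, inv_pow, Real.sq_sqrt hn]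
    ring
  simp only [Finset.mul_sum]
  exact tendstoInDistribution_sum_of_ae_abs_le (Y := fun n j ω => Y n (X n j ω))
    (fun n j => HasLaw.fun_comp ⟨(hYmeas n).aemeasurable, rfl⟩ (hlaw n j))
    (fun n => (hindep n).comp (fun _ => Y n) fun _ => hYmeas n) hbound hK hmean
    (hvar.congr' hsq)

theorem clt_for_simple_function_general {μ : Measure E} (ha : Tendsto a atTop atTop)
    (han : Tendsto (fun n : ℕ => a n / n) atTop (𝓝 0))
    (hlim : ∀ A : Set E, MeasurableSet A → μ A < ∞ →
      Tendsto (fun n : ℕ => ENNReal.ofReal (n / a n) * P n A) atTop (𝓝 (μ A)))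
    (hlaw : ∀ n j, HasLaw (X n j) (P n) (Pr n)) (hindep : ∀ n, iIndepFun (X n) (Pr n))
    (g : SimpleFunc E ℝ) (hg : Integrable g μ) :
    TendstoInDistribution (fun n ω => (√(a n))⁻¹ * ∑ j, (g (X n j ω) - ∫ x, g x ∂P n)) atTop id
      Pr (gaussianReal 0 (∫ x, g x ^ 2 ∂μ).toNNReal) := by
  have rate_nonneg : ∀ᶠ n : ℕ in atTop, 0 ≤ n / a n := by
    filter_upwards [ha.eventually_ge_atTop 0] with n hn using by positivity
  have hlim_real (A : Set E) (hA : MeasurableSet A) (hμA : μ A < ∞) :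
      Tendsto (fun n : ℕ => n / a n * (P n).real A) atTop (𝓝 (μ.real A)) :=
    tendsto_mul_measureReal rate_nonneg hμA.ne (hlim A hA hμA)
  have hg_sq : Integrable (g.map (· ^ 2)) μ :=
    ((SimpleFunc.integrable_iff_finMeasSupp.1 hg).map (by simp)).integrable
  have variance_tendsto :
      Tendsto (fun n : ℕ => n / a n * Var[g; P n]) atTop (𝓝 (∫ x, g x ^ 2 ∂μ)) :=
    tendsto_mul_variance (fun n => g.memLp_of_isFiniteMeasure 2 (P n))
      (by simpa only [inv_div] using han) (tendsto_mul_integral_simpleFunc hlim_real g hg)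
      (tendsto_mul_integral_simpleFunc hlim_real (g.map (· ^ 2)) hg_sq)
  obtain ⟨C, hC⟩ := g.exists_forall_norm_le
  refine tendstoInDistribution_inv_sqrt_mul_sum_of_abs_le ha hlaw hindep g.measurable hC ?_
  rwa [Real.coe_toNNReal _ (integral_nonneg fun x => sq_nonneg (g x))]

end NormalizedSum

/-- Under Assumption 2.1, with `X_{n,1}, …, X_{n,n}` i.i.d. with law `P n`
and `g` a simple function built from sets of finite `μ`-measure,
`a_n^{-1/2} Σ_{j=1}^n (g(X_{n,j}) − ∫ g dP_n)` converges in distribution to the Gaussian law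
with mean `0` and variance `∫ g² dμ` (convergence in distribution is expressed by testing
against all bounded continuous functions). -/
theorem clt_for_simple_function
    {E Ω : Type*} [MeasurableSpace E] [MeasurableSpace Ω]
    (μ : Measure E) [SigmaFinite μ] [NullSingletonClass μ]
    (a : ℕ → ℝ) (P : ℕ → Measure E) [∀ n, IsProbabilityMeasure (P n)]
    (h21 : Assumption21 μ a P)
    (Pr : Measure Ω) [IsProbabilityMeasure Pr]
    (X : (n : ℕ) → Fin n → Ω → E)
    (hXmeas : ∀ n j, Measurable (X n j))
    (hXlaw : ∀ n : ℕ, 1 ≤ n → ∀ j, Measure.map (X n j) Pr = P n)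
    (hXindep : ∀ n : ℕ, iIndepFun (X n) Pr)
    (m : ℕ) (c : Fin m → ℝ) (B : Fin m → Set E)
    (hBmeas : ∀ i, MeasurableSet (B i)) (hBfin : ∀ i, μ (B i) < ∞)
    (g : E → ℝ) (hgdef : g = fun x => ∑ i : Fin m, Set.indicator (B i) (fun _ => c i) x) :
    ∀ φ : BoundedContinuousFunction ℝ ℝ,
      Tendsto (fun n : ℕ =>
          ∫ ω, φ ((Real.sqrt (a n))⁻¹ *
            ∑ j : Fin n, (g (X n j ω) - ∫ x, g x ∂(P n))) ∂Pr)
        atTop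
        (𝓝 (∫ y, φ y ∂(gaussianReal 0 (Real.toNNReal (∫ x, g x ^ 2 ∂μ))))) := by
  obtain ⟨-, -, ha, han, -, hlim⟩ := h21
  obtain ⟨f, hf, hf_int⟩ := exists_simpleFunc_eq_sum_indicator c hBmeas hBfin
  rw [hgdef, ← hf]
  exact tendsto_integral_comp_of_tendstoInDistribution <|
    clt_for_simple_function_general ha han (fun A hA _ => hlim A hA)
      (fun n j => ⟨(hXmeas n j).aemeasurable, hXlaw n j.pos j⟩) hXindep f hf_int
end

section
/- Let P be a probability measure on a measurable space (E, 𝓔), let k_1, k_2 ≥ 1, let 0 ≤ l ≤ min(k_1, k_2), and let 𝒩 be a diagram with l edges between {1,…,k_1} and {1,…,k_2}. Then for all f ∈ L²(P^{k_1}) and g ∈ L²(P^{k_2}), ∫_{E^{k_1+k_2−l}} |(f⊗g)_{B(𝒩)}| dP^{k_1+k_2−l} ≤ ‖f‖_{L²(P^{k_1})} · ‖g‖_{L²(P^{k_2})}. -/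
open MeasureTheory Filter Topology
open scoped ENNReal NNReal

/-- Given a diagram, i.e. a pair of injections `j1 : Fin l ↪ Fin k1`, `j2 : Fin l ↪ Fin k2`,
substitute the variable `x (j1 s)` for the variable `z (j2 s)` for each edge `s`.
Integrating `f x * g (subst j1 j2 x z)` over `(x, z) ∈ E^{k1} × E^{k2}` with respect to a
product of probability measures realizes the integral of `(f ⊗ g)_{B(𝒩)}` over
`E^{k1+k2-l}` (the `l` matched `z`-coordinates become dummy variables). -/
noncomputable def subst {E : Type*} {k1 k2 l : ℕ} (j1 : Fin l ↪ Fin k1) (j2 : Fin l ↪ Fin k2)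
    (x : Fin k1 → E) (z : Fin k2 → E) : Fin k2 → E :=
  fun i => if h : ∃ s, j2 s = i then x (j1 (Classical.choose h)) else z i

/-!
The map `(x, z) ↦ subst j1 j2 x z` only selects pairwise distinct coordinates of the point `(x, z)`
of the product space, so it carries the product measure to the product measure on the selected
coordinates. Hence the two factors of `(f ⊗ g)_{B(𝒩)}` have the same norms as `f` and `g`, and the
bound is Hölder's inequality.
-/

section MeasurePreserving

variable {ι κ : Type*} [Fintype ι] [Fintype κ]

theorem measurePreserving_pi_comp_of_injective {X : κ → Type*} [∀ k, MeasurableSpace (X k)]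
    (μ : ∀ k, Measure (X k)) [∀ k, IsProbabilityMeasure (μ k)] {φ : ι → κ}
    (hφ : Function.Injective φ) :
    MeasurePreserving (fun (w : ∀ k, X k) i => w (φ i))
      (Measure.pi μ) (Measure.pi fun i => μ (φ i)) := by
  have coord_indep : ProbabilityTheory.iIndepFun (fun k (w : ∀ k, X k) => w k) (Measure.pi μ) :=
    ProbabilityTheory.iIndepFun_pi (X := fun _ => id) fun _ => aemeasurable_id
  refine ⟨by fun_prop, ?_⟩
  rw [(coord_indep.precomp hφ).map_fun_eq_pi_map
    fun i => (measurable_pi_apply (φ i)).aemeasurable]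
  congr 1 with i : 1
  exact (measurePreserving_eval μ (φ i)).map_eq

theorem measurePreserving_sumElim {E : Type*} [MeasurableSpace E]
    (μ : ι → Measure E) (ν : κ → Measure E) [∀ i, SigmaFinite (μ i)] [∀ i, SigmaFinite (ν i)] :
    MeasurePreserving (fun q : (ι → E) × (κ → E) => Sum.elim q.1 q.2)
      ((Measure.pi μ).prod (Measure.pi ν)) (Measure.pi (Sum.elim μ ν)) := by
  have : ∀ i, SigmaFinite (Sum.elim μ ν i) := Sum.rec ‹_› ‹_›
  exact measurePreserving_sumPiEquivProdPi_symm (Sum.elim μ ν)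

end MeasurePreserving

theorem eLpNorm_smul_comp_measurePreserving_le {Ω α β 𝕜 F : Type*} [MeasurableSpace Ω]
    [MeasurableSpace α] [MeasurableSpace β] [NormedRing 𝕜] [NormedAddCommGroup F]
    [MulActionWithZero 𝕜 F] [IsBoundedSMul 𝕜 F] {ρ : Measure Ω} {μ : Measure α} {ν : Measure β}
    {p q r : ℝ≥0∞} [ENNReal.HolderTriple p q r] {a : Ω → α} {b : Ω → β} {f : α → 𝕜} {g : β → F}
    (ha : MeasurePreserving a ρ μ) (hb : MeasurePreserving b ρ ν)
    (hf : AEStronglyMeasurable f μ) (hg : AEStronglyMeasurable g ν) :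
    eLpNorm (fun ω => f (a ω) • g (b ω)) r ρ ≤ eLpNorm f p μ * eLpNorm g q ν :=
  calc eLpNorm ((f ∘ a) • (g ∘ b)) r ρ
      ≤ eLpNorm (f ∘ a) p ρ * eLpNorm (g ∘ b) q ρ :=
        eLpNorm_smul_le_mul_eLpNorm (hg.comp_measurePreserving hb) (hf.comp_measurePreserving ha)
    _ = eLpNorm f p μ * eLpNorm g q ν := by
        rw [eLpNorm_comp_measurePreserving hf ha, eLpNorm_comp_measurePreserving hg hb]

section Diagram

variable {α ι κ : Type*}

/-- The variable, among the `x i` (left) and the `z k` (right), that a diagram with edges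
`(j₁ s, j₂ s)` substitutes for `z k`. -/
noncomputable def substIndex (j₁ : α → ι) (j₂ : α → κ) : κ → ι ⊕ κ :=
  Function.extend j₂ (Sum.inl ∘ j₁) Sum.inr

theorem substIndex_eq_inl_or_inr (j₁ : α → ι) (j₂ : α → κ) (k : κ) :
    (∃ s, j₂ s = k ∧ substIndex j₁ j₂ k = Sum.inl (j₁ s)) ∨ substIndex j₁ j₂ k = Sum.inr k := by
  by_cases h : ∃ s, j₂ s = k
  · exact .inl ⟨h.choose, h.choose_spec, dif_pos h⟩
  · exact .inr (dif_neg h)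

theorem substIndex_injective {j₁ : α → ι} (hj₁ : Function.Injective j₁) (j₂ : α → κ) :
    Function.Injective (substIndex j₁ j₂) := by
  intro k k' h
  rcases substIndex_eq_inl_or_inr j₁ j₂ k with ⟨s, rfl, hs⟩ | hk <;>
    rcases substIndex_eq_inl_or_inr j₁ j₂ k' with ⟨s', rfl, hs'⟩ | hk'
  · rw [hj₁ (Sum.inl_injective (hs.symm.trans (h.trans hs')))]
  · exact absurd (hs.symm.trans (h.trans hk')) Sum.inl_ne_inr
  · exact absurd (hk.symm.trans (h.trans hs')) Sum.inr_ne_inl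
  · exact Sum.inr_injective (hk.symm.trans (h.trans hk'))

theorem sumElim_substIndex {β : Type*} {j₁ : α → ι} {j₂ : α → κ} {u : ι → β} {v : κ → β}
    (huv : ∀ s, u (j₁ s) = v (j₂ s)) (k : κ) : Sum.elim u v (substIndex j₁ j₂ k) = v k := by
  rcases substIndex_eq_inl_or_inr j₁ j₂ k with ⟨s, rfl, hs⟩ | hk
  · rw [hs, Sum.elim_inl, huv]
  · rw [hk, Sum.elim_inr]

variable {E : Type*} {k₁ k₂ l : ℕ} (j₁ : Fin l ↪ Fin k₁) (j₂ : Fin l ↪ Fin k₂)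

theorem subst_eq_sumElim_substIndex (x : Fin k₁ → E) (z : Fin k₂ → E) :
    subst j₁ j₂ x z = fun k => Sum.elim x z (substIndex j₁ j₂ k) := by
  funext k
  simp only [subst, substIndex, Function.extend_def, apply_dite (Sum.elim x z),
    Function.comp_apply, Sum.elim_inl, Sum.elim_inr]

variable [MeasurableSpace E] {μ : Fin k₁ → Measure E} {ν : Fin k₂ → Measure E}
  [∀ i, IsProbabilityMeasure (μ i)] [∀ i, IsProbabilityMeasure (ν i)]

theorem measurePreserving_subst (hμν : ∀ s, μ (j₁ s) = ν (j₂ s)) :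
    MeasurePreserving (fun q : (Fin k₁ → E) × (Fin k₂ → E) => subst j₁ j₂ q.1 q.2)
      ((Measure.pi μ).prod (Measure.pi ν)) (Measure.pi ν) := by
  have : ∀ i, IsProbabilityMeasure (Sum.elim μ ν i) := Sum.rec ‹_› ‹_›
  have select := measurePreserving_pi_comp_of_injective (Sum.elim μ ν)
    (substIndex_injective j₁.injective j₂)
  simp only [sumElim_substIndex hμν] at select
  simpa only [subst_eq_sumElim_substIndex] using! select.comp (measurePreserving_sumElim μ ν)

theorem lintegral_diagram_le_general {𝕜 F : Type*} [NormedRing 𝕜] [NormedAddCommGroup F]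
    [MulActionWithZero 𝕜 F] [IsBoundedSMul 𝕜 F] {p q r : ℝ≥0∞} [ENNReal.HolderTriple p q r]
    (hμν : ∀ s, μ (j₁ s) = ν (j₂ s)) {f : (Fin k₁ → E) → 𝕜} {g : (Fin k₂ → E) → F}
    (hf : AEStronglyMeasurable f (Measure.pi μ)) (hg : AEStronglyMeasurable g (Measure.pi ν)) :
    eLpNorm (fun w : (Fin k₁ → E) × (Fin k₂ → E) => f w.1 • g (subst j₁ j₂ w.1 w.2)) r
        ((Measure.pi μ).prod (Measure.pi ν)) ≤
      eLpNorm f p (Measure.pi μ) * eLpNorm g q (Measure.pi ν) :=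
  eLpNorm_smul_comp_measurePreserving_le measurePreserving_fst
    (measurePreserving_subst j₁ j₂ hμν) hf hg

end Diagram

/-- For a probability measure `P`, a diagram `(j1, j2)` with `l` edges and
`f ∈ L²(P^{k1})`, `g ∈ L²(P^{k2})`, the integral of `|(f ⊗ g)_{B(𝒩)}|` over
`E^{k1+k2-l}` with respect to `P^{k1+k2-l}` is at most `‖f‖_{L²(P^{k1})} ‖g‖_{L²(P^{k2})}`. -/
theorem lintegral_diagram_le
    {E : Type*} [MeasurableSpace E] (P : Measure E) [IsProbabilityMeasure P]
    (k1 k2 l : ℕ) (hk1 : 1 ≤ k1) (hk2 : 1 ≤ k2) (hl1 : l ≤ k1) (hl2 : l ≤ k2)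
    (j1 : Fin l ↪ Fin k1) (j2 : Fin l ↪ Fin k2)
    (f : (Fin k1 → E) → ℝ) (g : (Fin k2 → E) → ℝ)
    (hf : MemLp f 2 (Measure.pi fun _ : Fin k1 => P))
    (hg : MemLp g 2 (Measure.pi fun _ : Fin k2 => P)) :
    ∫⁻ q : (Fin k1 → E) × (Fin k2 → E),
        ENNReal.ofReal |f q.1 * g (subst j1 j2 q.1 q.2)|
        ∂((Measure.pi fun _ : Fin k1 => P).prod (Measure.pi fun _ : Fin k2 => P)) ≤
      eLpNorm f 2 (Measure.pi fun _ : Fin k1 => P) *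
        eLpNorm g 2 (Measure.pi fun _ : Fin k2 => P) := by
  simpa only [eLpNorm_one_eq_lintegral_enorm, smul_eq_mul, Real.enorm_eq_ofReal_abs] using
    lintegral_diagram_le_general (p := 2) (q := 2) (r := 1) j1 j2 (fun _ => rfl) hf.1 hg.1
end
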